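/- Let G be a c-closed graph on n vertices and v a vertex of G. The number of maximal cliques K of G such that v ∈ K and K \ {v} is not a maximal clique of G \ {v} is at most n · 3^{(c-1)/3}. -/

import Mathlib

/-- A graph `G` is `c`-closed if whenever two distinct vertices have at least `c`
common neighbors, they are adjacent. -/
def CClosed {V : Type*} (c : ℕ) (G : SimpleGraph V) : Prop :=
  ∀ u w : V, u ≠ w → c ≤ (G.neighborSet u ∩ G.neighborSet w).ncard → G.Adj u w

/-- `K` is a maximal clique of `G`: a clique not properly contained in any other clique. -/
def IsMaxClique {V : Type*} (G : SimpleGraph V) (K : Set V) : Prop :=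
  G.IsClique K ∧ ∀ K' : Set V, G.IsClique K' → K ⊆ K' → K = K'

/-- `K` is a maximal clique of the subgraph of `G` induced by `S`: a clique of `G`
contained in `S` that is not properly contained in any other clique of `G`
contained in `S`.  (Cliques of `G[S]` are exactly cliques of `G` contained in `S`.) -/
def IsMaxCliqueIn {V : Type*} (G : SimpleGraph V) (S : Set V) (K : Set V) : Prop :=
  K ⊆ S ∧ G.IsClique K ∧ ∀ K' : Set V, K' ⊆ S → G.IsClique K' → K ⊆ K' → K = K'

theorem cube_le_three_pow (k : ℕ) : k ^ 3 ≤ 3 ^ k := by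
  rcases lt_or_ge k 3 with h | h
  · interval_cases k <;> norm_num
  · induction k, h using Nat.le_induction with
    | base => norm_num
    | succ m hm ih =>
      rw [pow_succ 3 m]
      nlinarith [mul_le_mul hm hm (by omega) (by omega), Nat.mul_le_mul_right (m ^ 2) hm]

theorem le_three_rpow (k : ℕ) : (k : ℝ) ≤ 3 ^ ((k : ℝ) / 3) := by
  have h : ((k : ℝ)) ^ 3 ≤ 3 ^ k := by exact_mod_cast cube_le_three_pow k
  have h2 : ((3 : ℝ) ^ ((k : ℝ) / 3)) ^ 3 = 3 ^ k := by
    rw [← Real.rpow_natCast, ← Real.rpow_mul (by norm_num), ← Real.rpow_natCast]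
    congr 1
    push_cast
    ring
  rw [← h2] at h
  exact le_of_pow_le_pow_left₀ (by norm_num) (by positivity) h

theorem ncard_insert_le {V : Type*} [Finite V] (G : SimpleGraph V) (S : Set V) (v : V) :
    {K : Set V | v ∈ K ∧ IsMaxCliqueIn G S (K \ {v})}.ncard
      ≤ {K : Set V | IsMaxCliqueIn G S K}.ncard := by
  refine Set.ncard_le_ncard_of_injOn (fun K => K \ {v}) (fun K hK => hK.2) ?_ (Set.toFinite _)
  intro K hK L hL h
  have h' : insert v (K \ {v}) = insert v (L \ {v}) := congrArg (insert v) h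
  rwa [Set.insert_diff_self_of_mem hK.1, Set.insert_diff_self_of_mem hL.1] at h'

/-- Passing to the neighbourhood. -/
theorem IsMaxCliqueIn.nbr {V : Type*} {G : SimpleGraph V} {S K : Set V} {u : V}
    (h : IsMaxCliqueIn G S K) (hu : u ∈ K) :
    IsMaxCliqueIn G (G.neighborSet u ∩ S) (K \ {u}) := by
  obtain ⟨hS, hK, hmax⟩ := h
  refine ⟨fun x hx => ⟨hK hu hx.1 (fun e => hx.2 e.symm), hS hx.1⟩,
    hK.subset Set.diff_subset, ?_⟩
  intro K' hK'S hK' hsub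
  have hc : G.IsClique (insert u K') :=
    SimpleGraph.isClique_insert.2 ⟨hK', fun b hb _ => (hK'S hb).1⟩
  have hKe : K = insert u K' := by
    apply hmax _ _ hc
    · intro x hx
      by_cases e : x = u
      · exact Or.inl e
      · exact Or.inr (hsub ⟨hx, e⟩)
    · exact Set.insert_subset (hS hu) (fun x hx => (hK'S hx).2)
  have huK' : u ∉ K' := fun hx => G.loopless.irrefl u (hK'S hx).1
  rw [hKe]
  simp [huK']

/-- The Moon-Moser bound. -/
theorem moon_moser {V : Type*} [Finite V] (G : SimpleGraph V) (m : ℕ) :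
    ∀ S : Set V, S.ncard = m →
      ({K : Set V | IsMaxCliqueIn G S K}.ncard : ℝ) ≤ 3 ^ ((m : ℝ) / 3) := by
  classical
  induction m using Nat.strong_induction_on with
  | _ m ih =>
  intro S hSm
  rcases S.eq_empty_or_nonempty with rfl | hne
  · have : {K : Set V | IsMaxCliqueIn G ∅ K}.ncard ≤ 1 := by
      refine Set.ncard_le_one_iff_subsingleton.2 ?_
      intro K hK L hL
      rw [Set.subset_empty_iff.1 hK.1, Set.subset_empty_iff.1 hL.1]
    calc ({K : Set V | IsMaxCliqueIn G ∅ K}.ncard : ℝ) ≤ 1 := by exact_mod_cast this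
      _ ≤ _ := Real.one_le_rpow (by norm_num) (by positivity)
  · obtain ⟨v, hv, hvmax⟩ := Set.exists_max_image S
      (fun u => (G.neighborSet u ∩ S).ncard) (Set.toFinite S) hne
    have hfin : (S \ G.neighborSet v).Finite := Set.toFinite _
    have hsub : {K : Set V | IsMaxCliqueIn G S K} ⊆
        ⋃ u ∈ hfin.toFinset,
          {K : Set V | u ∈ K ∧ IsMaxCliqueIn G (G.neighborSet u ∩ S) (K \ {u})} := by
      intro K hK
      have hK' : IsMaxCliqueIn G S K := hK
      have : ∃ u ∈ K, u ∉ G.neighborSet v := by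
        by_contra! hcon
        have hc : G.IsClique (insert v K) :=
          SimpleGraph.isClique_insert.2 ⟨hK'.2.1, fun b hb _ => hcon b hb⟩
        have he := hK'.2.2 _ (Set.insert_subset hv hK'.1) hc (Set.subset_insert _ _)
        have hvK : v ∈ K := by rw [he]; exact Set.mem_insert _ _
        exact G.loopless.irrefl v (hcon v hvK)
      obtain ⟨u, huK, hu⟩ := this
      simp only [Set.mem_iUnion]
      exact ⟨u, by simpa using ⟨hK'.1 huK, hu⟩, huK, hK'.nbr huK⟩
    set a := (S \ G.neighborSet v).ncard with ha
    set b := (G.neighborSet v ∩ S).ncard with hb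
    have hab : a + b = m := by
      rw [ha, hb, ← hSm, Set.inter_comm, add_comm]
      exact Set.ncard_inter_add_ncard_diff_eq_ncard S _ (Set.toFinite _)
    have h1 := (Set.ncard_le_ncard hsub (Set.toFinite _)).trans
      (Finset.set_ncard_biUnion_le _ _)
    have hterm : ∀ u ∈ hfin.toFinset,
        (({K : Set V | u ∈ K ∧ IsMaxCliqueIn G (G.neighborSet u ∩ S) (K \ {u})}.ncard : ℕ) : ℝ)
          ≤ 3 ^ ((b : ℝ) / 3) := by
      intro u hu
      have huS : u ∈ S := by
        have := hfin.mem_toFinset.1 hu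
        exact this.1
      have hlt : (G.neighborSet u ∩ S).ncard < m := by
        rw [← hSm]
        apply Set.ncard_lt_ncard _ (Set.toFinite _)
        refine ⟨Set.inter_subset_right, fun h => G.loopless.irrefl u (h huS).1⟩
      have h2 := ih _ hlt _ rfl
      have h3 : (({K : Set V | u ∈ K ∧
          IsMaxCliqueIn G (G.neighborSet u ∩ S) (K \ {u})}.ncard : ℕ) : ℝ) ≤ _ :=
        Nat.cast_le.2 (ncard_insert_le G (G.neighborSet u ∩ S) u)
      refine h3.trans (h2.trans ?_)
      apply Real.rpow_le_rpow_of_exponent_le (by norm_num)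
      have h4 : (G.neighborSet u ∩ S).ncard ≤ b := hvmax u huS
      have : ((G.neighborSet u ∩ S).ncard : ℝ) ≤ b := by exact_mod_cast h4
      linarith
    have h5 : (({K : Set V | IsMaxCliqueIn G S K}.ncard : ℕ) : ℝ) ≤
        ∑ u ∈ hfin.toFinset,
          (({K : Set V | u ∈ K ∧
            IsMaxCliqueIn G (G.neighborSet u ∩ S) (K \ {u})}.ncard : ℕ) : ℝ) := by
      exact_mod_cast h1
    refine h5.trans ((Finset.sum_le_card_nsmul _ _ _ hterm).trans ?_)
    rw [nsmul_eq_mul, ← Set.ncard_eq_toFinset_card _ hfin, ← ha, ← hab]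
    have h6 : ((a + b : ℕ) : ℝ) / 3 = (a : ℝ) / 3 + (b : ℝ) / 3 := by push_cast; ring
    rw [h6, Real.rpow_add (by norm_num)]
    exact mul_le_mul_of_nonneg_right (le_three_rpow a) (by positivity)

/-- In a `c`-closed graph on `n` vertices, for any vertex `v`, the number of
maximal cliques `K` of `G` with `v ∈ K` such that `K \ {v}` is not a maximal
clique of `G \ {v}` is at most `n * 3 ^ ((c - 1)/3)`. -/
theorem card_case_three_cliques_le {V : Type*} [Fintype V] {c n : ℕ} (hc : 0 < c)
    (G : SimpleGraph V) (hcard : Fintype.card V = n) (hG : CClosed c G) (v : V) :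
    (({K : Set V | IsMaxClique G K ∧ v ∈ K ∧
        ¬ IsMaxCliqueIn G {u : V | u ≠ v} (K \ {v})}.ncard : ℝ)) ≤
      (n : ℝ) * 3 ^ (((c : ℝ) - 1) / 3) := by
  classical
  have hsub : {K : Set V | IsMaxClique G K ∧ v ∈ K ∧
        ¬ IsMaxCliqueIn G {u : V | u ≠ v} (K \ {v})} ⊆
      ⋃ w ∈ (Finset.univ : Finset V), {K : Set V | (w ≠ v ∧ ¬ G.Adj v w) ∧
        (v ∈ K ∧ IsMaxCliqueIn G (G.neighborSet v ∩ G.neighborSet w) (K \ {v}))} := by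
    rintro K ⟨⟨hK, hmax⟩, hvK, hnot⟩
    have hex : ∃ K' : Set V, K' ⊆ {u : V | u ≠ v} ∧ G.IsClique K' ∧ K \ {v} ⊆ K' ∧
        K \ {v} ≠ K' := by
      by_contra! hcon
      exact hnot ⟨fun x hx => hx.2, hK.subset Set.diff_subset, hcon⟩
    obtain ⟨K', hK'v, hK', hs, hne⟩ := hex
    obtain ⟨w, hwK', hwK⟩ : ∃ w ∈ K', w ∉ K \ {v} := by
      by_contra! hcon
      exact hne (Set.Subset.antisymm hs hcon)
    have hwv : w ≠ v := hK'v hwK'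
    have hwK2 : w ∉ K := fun h => hwK ⟨h, hwv⟩
    have hadj : ∀ x ∈ K \ {v}, G.Adj w x := fun x hx =>
      hK' hwK' (hs hx) (fun e => hwK (e ▸ hx))
    have hnadj : ¬ G.Adj v w := by
      intro hvw
      have hc : G.IsClique (insert w K) := by
        refine SimpleGraph.isClique_insert.2 ⟨hK, fun x hx _ => ?_⟩
        by_cases e : x = v
        · rw [e]; exact hvw.symm
        · exact hadj x ⟨hx, e⟩
      have he := hmax _ hc (Set.subset_insert _ _)
      exact hwK2 (he ▸ Set.mem_insert w K)
    have hU : IsMaxCliqueIn G Set.univ K := ⟨Set.subset_univ _, hK, fun K' _ h => hmax K' h⟩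
    have hn := hU.nbr hvK
    simp only [Set.mem_iUnion]
    refine ⟨w, Finset.mem_univ _, ⟨hwv, hnadj⟩, hvK, ?_, hn.2.1, ?_⟩
    · exact fun x hx => ⟨(hn.1 hx).1, hadj x hx⟩
    · exact fun L hL => hn.2.2 L (fun x hx => ⟨(hL hx).1, Set.mem_univ _⟩)
  have h1 := (Set.ncard_le_ncard hsub (Set.toFinite _)).trans
    (Finset.set_ncard_biUnion_le _ _)
  refine (Nat.cast_le (α := ℝ).2 h1).trans ?_
  rw [Nat.cast_sum]
  refine (Finset.sum_le_card_nsmul _ _ (3 ^ (((c : ℝ) - 1) / 3)) ?_).trans ?_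
  · intro w _
    by_cases hw : w ≠ v ∧ ¬ G.Adj v w
    · simp only [hw, not_false_eq_true, ne_eq, and_self, true_and]
      refine (Nat.cast_le (α := ℝ).2 (ncard_insert_le G _ v)).trans
        ((moon_moser G _ _ rfl).trans ?_)
      apply Real.rpow_le_rpow_of_exponent_le (by norm_num)
      have hlt : (G.neighborSet v ∩ G.neighborSet w).ncard < c := by
        by_contra! hcon
        exact hw.2 (hG v w hw.1.symm hcon)
      have : ((G.neighborSet v ∩ G.neighborSet w).ncard : ℝ) + 1 ≤ c := by exact_mod_cast hlt
      linarith
    · simp only [hw, false_and, Set.setOf_false, Set.ncard_empty, Nat.cast_zero]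
      positivity
  · rw [nsmul_eq_mul, Finset.card_univ, hcard]
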